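/- Let M be a lattice log concave integer-valued random variable with support S, let d ∈ ℤ be such that d+1 ∈ S, and let N, Z be random variables on a common probability space such that N has the conditional distribution of M given M ≥ d, and conditionally on N, Z is Bernoulli with success probability π_N^{(d)}. Then N + Z has the conditional distribution of M given M ≥ d+1; that is, P(N + Z ≥ d + k) = P(M ≥ d + k | M ≥ d+1) for all integers k ≥ 1. -/

import Mathlib

open MeasureTheory ProbabilityTheory

/-- The law of a lattice log concave integer valued random variable, presented as a
probability measure `μ` on `ℤ`: the support is an integer interval and the point
masses satisfy `p_{x-1} p_{x+1} ≤ p_x ^ 2`. -/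
def IsLatticeLogConcave (μ : Measure ℤ) : Prop :=
  (∀ x y z : ℤ, x ≤ y → y ≤ z → μ {x} ≠ 0 → μ {z} ≠ 0 → μ {y} ≠ 0) ∧
  (∀ x : ℤ, (μ {x - 1}).toReal * (μ {x + 1}).toReal ≤ (μ {x}).toReal ^ 2)

/-- `π_x^{(d)} = P(M ≥ x+1) P(M = d) / (P(M ≥ d+1) P(M = x))` when `x` and `d+1` are in
the support of `μ` and `x ≥ d`, and `0` otherwise. -/
noncomputable def piCoef (μ : Measure ℤ) (d x : ℤ) : ℝ :=
  if μ {x} ≠ 0 ∧ μ {d + 1} ≠ 0 ∧ d ≤ x then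
    ((μ (Set.Ici (x + 1))).toReal * (μ {d}).toReal) /
      ((μ (Set.Ici (d + 1))).toReal * (μ {x}).toReal)
  else 0

/-! Conditioning on `N`, the event `N + Z ≥ x + 1` has probability `P(N ≥ x + 1) + π_x P(N = x)`.
For `x ≥ d` the coefficient is chosen so that `π_x P(M = x) = P(M ≥ x + 1) P(M = d) / P(M ≥ d + 1)`;
when `P(M = x) = 0` this still holds because the support has no gap, so that either `x = d` or the
tail beyond `x` is null. Hence the sum is `P(M ≥ x + 1) / P(M ≥ d)` times
`1 + P(M = d) / P(M ≥ d + 1) = P(M ≥ d) / P(M ≥ d + 1)`. -/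

open Set

theorem IsLatticeLogConcave.ordConnected_support {μ : Measure ℤ} (hμ : IsLatticeLogConcave μ) :
    {x | μ {x} ≠ 0}.OrdConnected :=
  ⟨fun x hx z hz y hy ↦ hμ.1 x y z hy.1 hy.2 hx hz⟩

theorem measure_Ici_eq_zero_of_ordConnected_support {α : Type*} [Preorder α] [Countable α]
    [MeasurableSpace α] {μ : Measure α} (hμ : {x | μ {x} ≠ 0}.OrdConnected) {a b : α}
    (hab : a ≤ b) (ha : μ {a} ≠ 0) (hb : μ {b} = 0) : μ (Ici b) = 0 := by
  refine (measure_null_iff_singleton (to_countable _)).2 fun y hby ↦ ?_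
  by_contra hy
  exact hμ.out ha hy ⟨hab, hby⟩ hb

theorem cond_eq_one_of_subset {α : Type*} [MeasurableSpace α] {μ : Measure α} {s t : Set α}
    (hs : MeasurableSet s) (hst : s ⊆ t) (hs_zero : μ s ≠ 0) (hs_top : μ s ≠ ⊤) :
    μ[t | s] = 1 := by
  rw [cond_apply hs, inter_eq_left.2 hst, ENNReal.inv_mul_cancel hs_zero hs_top]

theorem measureReal_cond_of_subset {α : Type*} [MeasurableSpace α] (μ : Measure α) {s t : Set α}
    (hs : MeasurableSet s) (hts : t ⊆ s) : (μ[|s]).real t = μ.real t / μ.real s := by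
  rw [measureReal_def, cond_apply hs, inter_eq_right.2 hts, ENNReal.toReal_mul,
    ENNReal.toReal_inv, inv_mul_eq_div, measureReal_def, measureReal_def]

theorem measureReal_Ici_eq_singleton_add (μ : Measure ℤ) [IsFiniteMeasure μ] (d : ℤ) :
    μ.real (Ici d) = μ.real {d} + μ.real (Ici (d + 1)) := by
  rw [Ici_add_one_eq_Ioi, ← Ioi_insert, insert_eq,
    measureReal_union (by simp) measurableSet_Ioi]

theorem measure_add_one_le_add {Ω : Type*} [MeasurableSpace Ω] (P : Measure Ω) {N Z : Ω → ℤ}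
    (hN : Measurable N) (hZ : ∀ ω, Z ω = 0 ∨ Z ω = 1) (x : ℤ) :
    P {ω | x + 1 ≤ N ω + Z ω} = P {ω | x + 1 ≤ N ω} + P ({ω | Z ω = 1} ∩ {ω | N ω = x}) := by
  have hsplit : {ω | x + 1 ≤ N ω + Z ω} =
      {ω | x + 1 ≤ N ω} ∪ ({ω | Z ω = 1} ∩ {ω | N ω = x}) := by
    ext ω
    have := hZ ω
    simp only [mem_ofPred_eq, mem_union, mem_inter_iff]
    omega
  have hdisj : Disjoint {ω | x + 1 ≤ N ω} ({ω | Z ω = 1} ∩ {ω | N ω = x}) := by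
    rw [disjoint_left]
    rintro ω (hge : x + 1 ≤ N ω) ⟨-, heq : N ω = x⟩
    omega
  rw [hsplit, measure_union' hdisj (measurableSet_le measurable_const hN)]

section piCoef

theorem piCoef_nonneg (μ : Measure ℤ) (d x : ℤ) : 0 ≤ piCoef μ d x := by
  unfold piCoef
  split_ifs <;> positivity

theorem piCoef_of_lt (μ : Measure ℤ) {d x : ℤ} (hxd : x < d) : piCoef μ d x = 0 :=
  if_neg fun h ↦ hxd.not_ge h.2.2

variable {μ : Measure ℤ} [IsFiniteMeasure μ] {d : ℤ}

theorem piCoef_mul_measureReal_singleton (hμ : {x | μ {x} ≠ 0}.OrdConnected)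
    (hd : μ {d + 1} ≠ 0) {x : ℤ} (hdx : d ≤ x) :
    piCoef μ d x * μ.real {x} = μ.real (Ici (x + 1)) * μ.real {d} / μ.real (Ici (d + 1)) := by
  by_cases hx : μ {x} = 0
  · have hnull : μ.real (Ici (x + 1)) * μ.real {d} = 0 := by
      rcases hdx.eq_or_lt with rfl | hlt
      · simp [measureReal_def, hx]
      · have htail : μ (Ici (x + 1)) = 0 :=
          measure_mono_null (Ici_subset_Ici.2 (Int.le_add_one le_rfl))
            (measure_Ici_eq_zero_of_ordConnected_support hμ hlt hd hx)
        simp [measureReal_def, htail]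
    rw [hnull, zero_div, measureReal_def, hx, ENNReal.toReal_zero, mul_zero]
  · have hx' : μ.real {x} ≠ 0 := (ENNReal.toReal_pos hx (measure_ne_top μ _)).ne'
    rw [piCoef, if_pos ⟨hx, hd, hdx⟩]
    simp only [← measureReal_def]
    field_simp

theorem measureReal_cond_Ici_add_piCoef_mul (hμ : {x | μ {x} ≠ 0}.OrdConnected)
    (hd : μ {d + 1} ≠ 0) {x : ℤ} (hdx : d ≤ x) :
    (μ[|Ici d]).real (Ici (x + 1)) + piCoef μ d x * (μ[|Ici d]).real {x} =
      (μ[|Ici (d + 1)]).real (Ici (x + 1)) := by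
  have htail_pos : 0 < μ.real (Ici (d + 1)) :=
    (ENNReal.toReal_pos hd (measure_ne_top μ _)).trans_le
      (measureReal_mono (singleton_subset_iff.2 self_mem_Ici))
  rw [measureReal_cond_of_subset μ measurableSet_Ici (Ici_subset_Ici.2 (by omega)),
    measureReal_cond_of_subset μ measurableSet_Ici (singleton_subset_iff.2 hdx),
    measureReal_cond_of_subset μ measurableSet_Ici (Ici_subset_Ici.2 (by omega)),
    mul_div_assoc', piCoef_mul_measureReal_singleton hμ hd hdx,
    measureReal_Ici_eq_singleton_add μ d]
  field_simp
  ring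

theorem cond_Ici_add_piCoef_mul (hμ : {x | μ {x} ≠ 0}.OrdConnected) (hd : μ {d + 1} ≠ 0)
    (x : ℤ) :
    μ[Ici (x + 1) | Ici d] + ENNReal.ofReal (piCoef μ d x) * μ[{x} | Ici d] =
      μ[Ici (x + 1) | Ici (d + 1)] := by
  rcases lt_or_ge x d with hxd | hdx
  · have htail : μ (Ici (d + 1)) ≠ 0 :=
      fun h ↦ hd (measure_mono_null (singleton_subset_iff.2 self_mem_Ici) h)
    have hhead : μ (Ici d) ≠ 0 :=
      fun h ↦ htail (measure_mono_null (Ici_subset_Ici.2 (Int.le_add_one le_rfl)) h)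
    rw [piCoef_of_lt μ hxd, ENNReal.ofReal_zero, zero_mul, add_zero,
      cond_eq_one_of_subset measurableSet_Ici (Ici_subset_Ici.2 (by omega)) hhead
        (measure_ne_top μ _),
      cond_eq_one_of_subset measurableSet_Ici (Ici_subset_Ici.2 (by omega)) htail
        (measure_ne_top μ _)]
  · have hpi := piCoef_nonneg μ d x
    rw [← ofReal_measureReal (s := Ici (x + 1)), ← ofReal_measureReal (s := {x}),
      ← ofReal_measureReal (s := Ici (x + 1)), ← ENNReal.ofReal_mul hpi,
      ← ENNReal.ofReal_add measureReal_nonneg (by positivity),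
      measureReal_cond_Ici_add_piCoef_mul hμ hd hdx]

end piCoef

theorem add_one_coupling_of_latticeLogConcave_general (μM : Measure ℤ) [IsFiniteMeasure μM]
    (hsupp : {x | μM {x} ≠ 0}.OrdConnected) (d : ℤ) (hd1 : μM {d + 1} ≠ 0)
    {Ω : Type*} [MeasurableSpace Ω] (P : Measure Ω)
    (N Z : Ω → ℤ) (hNmeas : Measurable N) (hZmeas : Measurable Z)
    (hNlaw : Measure.map N P = μM[|Ici d])
    (hZ01 : ∀ ω, Z ω = 0 ∨ Z ω = 1)
    (hZcond : ∀ n : ℤ, P ({ω | Z ω = 1} ∩ {ω | N ω = n}) =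
      ENNReal.ofReal (piCoef μM d n) * P {ω | N ω = n}) :
    Measure.map (fun ω ↦ N ω + Z ω) P = μM[|Ici (d + 1)] := by
  have hN (s : Set ℤ) : P (N ⁻¹' s) = μM[s | Ici d] := by
    rw [← hNlaw, Measure.map_apply hNmeas .of_discrete]
  have : IsFiniteMeasure (Measure.map N P) := hNlaw ▸ inferInstance
  have : IsFiniteMeasure P := Measure.isFiniteMeasure_of_map hNmeas.aemeasurable
  refine Measure.ext_of_Ici _ _ fun y ↦ ?_
  obtain ⟨x, rfl⟩ : ∃ x, y = x + 1 := ⟨y - 1, by ring⟩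
  calc Measure.map (fun ω ↦ N ω + Z ω) P (Ici (x + 1))
      = P {ω | x + 1 ≤ N ω + Z ω} := Measure.map_apply (hNmeas.add hZmeas) measurableSet_Ici
    _ = P (N ⁻¹' Ici (x + 1)) + P ({ω | Z ω = 1} ∩ {ω | N ω = x}) :=
        measure_add_one_le_add P hNmeas hZ01 x
    _ = P (N ⁻¹' Ici (x + 1)) + ENNReal.ofReal (piCoef μM d x) * P (N ⁻¹' {x}) := by
        rw [hZcond]; rfl
    _ = μM[|Ici (d + 1)] (Ici (x + 1)) := by
        rw [hN, hN, cond_Ici_add_piCoef_mul hsupp hd1]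

/-- If `N` has the law of a lattice log concave `M` conditioned on `M ≥ d`, with `d+1` in
the support, and given `N` the variable `Z` is Bernoulli with success probability
`π_N^{(d)}`, then `N + Z` has the law of `M` conditioned on `M ≥ d + 1`. -/
theorem add_one_coupling_of_latticeLogConcave (μM : Measure ℤ) [IsProbabilityMeasure μM]
    (hLC : IsLatticeLogConcave μM) (d : ℤ) (hd1 : μM {d + 1} ≠ 0)
    {Ω : Type*} [MeasurableSpace Ω] (P : Measure Ω) [IsProbabilityMeasure P]
    (N Z : Ω → ℤ) (hNmeas : Measurable N) (hZmeas : Measurable Z)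
    (hNlaw : Measure.map N P = μM[|Set.Ici d])
    (hZ01 : ∀ ω, Z ω = 0 ∨ Z ω = 1)
    (hZcond : ∀ n : ℤ, P ({ω | Z ω = 1} ∩ {ω | N ω = n}) =
      ENNReal.ofReal (piCoef μM d n) * P {ω | N ω = n}) :
    Measure.map (fun ω => N ω + Z ω) P = μM[|Set.Ici (d + 1)] :=
  add_one_coupling_of_latticeLogConcave_general μM hLC.ordConnected_support d hd1 P N Z hNmeas
    hZmeas hNlaw hZ01 hZcond
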